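/- Given k ≥ 2 and m ≥ 3k, consider a balanced weighting of D ∈ D_k which implies a graph G ∈ B_m(D). Then G minimizes d_3 within B_m(D_k) if and only if all 3-bonds of D are trivial and the π^v-values of D are balanced (the latter condition being vacuous when 3k divides m). -/

import Mathlib

open Classical Finset

noncomputable section

/-- A finite multigraph: edges carry two (possibly equal) endpoints. -/
structure Multigraph where
  V : Type
  E : Type
  [fintV : Fintype V]
  [fintE : Fintype E]
  src : E → V
  tgt : E → V

attribute [instance] Multigraph.fintV Multigraph.fintE

namespace Multigraph

variable (G : Multigraph)

/-- Number of vertices. -/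
def nV : ℕ := Fintype.card G.V

/-- Number of edges (with multiplicity). -/
def nE : ℕ := Fintype.card G.E

/-- One step along an edge belonging to the edge set `S`. -/
def stepOn (S : Finset G.E) (u v : G.V) : Prop :=
  ∃ e ∈ S, (G.src e = u ∧ G.tgt e = v) ∨ (G.src e = v ∧ G.tgt e = u)

/-- The spanning subgraph with edge set `S` is connected. -/
def ConnOn (S : Finset G.E) : Prop :=
  ∀ u v : G.V, Relation.ReflTransGen (G.stepOn S) u v

/-- `G` is connected. -/
def Connected : Prop := G.ConnOn Finset.univ

/-- The edge set `F` disconnects `G` (i.e. is a disconnection). -/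
def Disconnects (F : Finset G.E) : Prop := ¬ G.ConnOn (Finset.univ \ F)

/-- `d i G`: the number of `i`-disconnections of `G`. -/
def d (i : ℕ) : ℕ :=
  ((Finset.univ : Finset (Finset G.E)).filter fun F => F.card = i ∧ G.Disconnects F).card

/-- The all-terminal reliability `R(G,p)`: each edge is independently retained with
probability `p`; this is the probability that the retained spanning subgraph is connected. -/
def rel (p : ℝ) : ℝ :=
  ∑ S : Finset G.E, if G.ConnOn S then p ^ S.card * (1 - p) ^ (G.nE - S.card) else 0

/-- `e` is a bridge. -/
def IsBridge (e : G.E) : Prop := G.Disconnects {e}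

def Bridgeless : Prop := ∀ e : G.E, ¬ G.IsBridge e

/-- The number of spanning trees of `G` (connected spanning subgraphs with `nV - 1` edges). -/
def treeCount : ℕ :=
  ((Finset.univ : Finset (Finset G.E)).filter fun S => S.card + 1 = G.nV ∧ G.ConnOn S).card

/-- The edge-connectivity: the least size of a disconnecting set of edges. -/
def edgeConnectivity : ℕ :=
  sInf {i : ℕ | ∃ F : Finset G.E, F.card = i ∧ G.Disconnects F}

/-- Degree of a vertex (a loop counts twice). -/
def deg (v : G.V) : ℕ :=
  (Finset.univ.filter fun e => G.src e = v).card +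
    (Finset.univ.filter fun e => G.tgt e = v).card

/-- The edges crossing the vertex set `A`. -/
def cutEdges (A : Finset G.V) : Finset G.E :=
  Finset.univ.filter fun e =>
    (G.src e ∈ A ∧ G.tgt e ∉ A) ∨ (G.src e ∉ A ∧ G.tgt e ∈ A)

/-- `F` is a cut: the set of edges crossing a nontrivial bipartition of the vertices. -/
def IsCut (F : Finset G.E) : Prop :=
  ∃ A : Finset G.V, A.Nonempty ∧ A ≠ Finset.univ ∧ F = G.cutEdges A

/-- `F` is a bond: a minimal cut. -/
def IsBond (F : Finset G.E) : Prop :=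
  G.IsCut F ∧ ∀ F' ⊆ F, G.IsCut F' → F' = F

/-- Number of `s`-bonds of `G`. -/
def bondCount (s : ℕ) : ℕ :=
  ((Finset.univ : Finset (Finset G.E)).filter fun F => F.card = s ∧ G.IsBond F).card

/-- Adjacency of vertices. -/
def Adj (u v : G.V) : Prop :=
  ∃ e : G.E, (G.src e = u ∧ G.tgt e = v) ∨ (G.src e = v ∧ G.tgt e = u)

/-- `G` is simple: no loops and no parallel edges. -/
def IsSimple : Prop :=
  (∀ e : G.E, G.src e ≠ G.tgt e) ∧
    ∀ e f : G.E,
      ((G.src e = G.src f ∧ G.tgt e = G.tgt f) ∨ (G.src e = G.tgt f ∧ G.tgt e = G.src f)) →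
        e = f

end Multigraph

/-- `G ∈ 𝒢_{n,m}`: connected with `n` vertices and `m` edges. -/
def memG (G : Multigraph) (n m : ℕ) : Prop :=
  G.nV = n ∧ G.nE = m ∧ G.Connected

/-- Isomorphism of multigraphs. -/
structure MGIso (G H : Multigraph) where
  vMap : G.V ≃ H.V
  eMap : G.E ≃ H.E
  ends_eq : ∀ e : G.E,
    (H.src (eMap e) = vMap (G.src e) ∧ H.tgt (eMap e) = vMap (G.tgt e)) ∨
    (H.src (eMap e) = vMap (G.tgt e) ∧ H.tgt (eMap e) = vMap (G.src e))

def IsIso (G H : Multigraph) : Prop := Nonempty (MGIso G H)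

/-- `G` is `p`-optimal in `𝒢_{n,m}`. -/
def pOptimal (G : Multigraph) (n m : ℕ) (p : ℝ) : Prop :=
  memG G n m ∧ ∀ H : Multigraph, memG H n m → H.rel p ≤ G.rel p

/-- `G` is uniquely optimal in `𝒢_{n,m}`: strictly more reliable than every
non-isomorphic member, for every `p ∈ (0,1)`. -/
def UniquelyOptimal (G : Multigraph) (n m : ℕ) : Prop :=
  memG G n m ∧ ∀ H : Multigraph, memG H n m → ¬ IsIso G H →
    ∀ p : ℝ, 0 < p → p < 1 → H.rel p < G.rel p

noncomputable instance quotFintype {α : Type} [Fintype α] {r : α → α → Prop} :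
    Fintype (Quot r) :=
  letI := Classical.decEq (Quot r)
  Fintype.ofSurjective (Quot.mk r) fun q => Quot.exists_rep q

/-- Identification of the endpoints of zero-weight edges. -/
def zeroRel (D : Multigraph) (w : D.E → ℕ) : D.V → D.V → Prop :=
  fun u v => ∃ e : D.E, w e = 0 ∧ D.src e = u ∧ D.tgt e = v

/-- The `j`-th node along the chain replacing the edge `e` (whose chain has `w e` edges). -/
def chainNode (D : Multigraph) (w : D.E → ℕ) (e : D.E) (j : ℕ) :
    Quot (zeroRel D w) ⊕ (Σ f : D.E, Fin (w f - 1)) :=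
  if h : 0 < j ∧ j < w e then Sum.inr ⟨e, ⟨j - 1, by omega⟩⟩
  else if j = 0 then Sum.inl (Quot.mk _ (D.src e))
  else Sum.inl (Quot.mk _ (D.tgt e))

/-- The weak subdivision of `D` determined by the chain lengths `w`: each edge `e` is
replaced by a chain with `w e` edges; zero-weight edges are contracted. -/
def subdivide (D : Multigraph) (w : D.E → ℕ) : Multigraph where
  V := Quot (zeroRel D w) ⊕ (Σ f : D.E, Fin (w f - 1))
  E := Σ f : D.E, Fin (w f)
  src f := chainNode D w f.1 f.2.val
  tgt f := chainNode D w f.1 (f.2.val + 1)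

/-- The zero-weight edges contain no cycle (no "zero cycle"): they form a forest. -/
def ZeroAcyclic (D : Multigraph) (w : D.E → ℕ) : Prop :=
  Fintype.card (Quot (zeroRel D w)) +
      (Finset.univ.filter fun e : D.E => w e = 0).card = Fintype.card D.V

/-- `G` is a weak subdivision of `D` with chain lengths `w`. -/
def IsWeakSubdivision (G D : Multigraph) (w : D.E → ℕ) : Prop :=
  ZeroAcyclic D w ∧ IsIso G (subdivide D w)

/-- `D` is a weak distillation of `G`. -/
def IsWeakDistillation (D G : Multigraph) : Prop :=
  ∃ w : D.E → ℕ, IsWeakSubdivision G D w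

/-- The chain lengths differ pairwise by at most one. -/
def BalancedWeights {E : Type} (w : E → ℕ) : Prop := ∀ e f : E, w e ≤ w f + 1

/-- `D ∈ 𝒟_k`: connected, cubic, 3-edge-connected, of exceedance `k`. -/
def memDk (k : ℕ) (D : Multigraph) : Prop :=
  D.Connected ∧ (∀ v : D.V, D.deg v = 3) ∧
    (∀ F : Finset D.E, D.Disconnects F → 3 ≤ F.card) ∧ D.nE = D.nV + k

/-- Identification of the two endpoints of the edge `e`. -/
def contractRel (G : Multigraph) (e : G.E) : G.V → G.V → Prop :=
  fun u v => u = G.src e ∧ v = G.tgt e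

/-- Contraction of the edge `e`. -/
def Multigraph.contract (G : Multigraph) (e : G.E) : Multigraph :=
  letI := Classical.decEq G.E
  { V := Quot (contractRel G e)
    E := {f : G.E // f ≠ e}
    src := fun f => Quot.mk _ (G.src f.1)
    tgt := fun f => Quot.mk _ (G.tgt f.1) }

/-- `G'` is obtained from `G` by shifting an edge: in an intermediate graph `H`
(the expansion of `G` at a vertex by the new edge `e'`), the edges `e, e'` form a
2-bond; contracting `e'` gives back `G`, while contracting `e` gives `G'`. -/
def IsShiftOf (G G' : Multigraph) : Prop :=
  ∃ (H : Multigraph) (e e' : H.E), e ≠ e' ∧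
    H.src e ≠ H.tgt e ∧ H.src e' ≠ H.tgt e' ∧
    H.IsBond {e, e'} ∧
    IsIso (H.contract e') G ∧ IsIso (H.contract e) G'

/-- Equivalence of graphs: repeated edge shifting. -/
def EquivalentGraphs (G G' : Multigraph) : Prop :=
  Relation.ReflTransGen IsShiftOf G G'

/-- `G'` is obtained from `G` by moving the (non-loop) edge `e`: contracting `e` and
expanding a new edge, identified with `e` via `φ`, at an arbitrary vertex.
Equivalently, `G/e` and `G'/φ e` agree, compatibly with the edge identification `φ`. -/
def MovedEdge (G G' : Multigraph) (φ : G.E ≃ G'.E) (e : G.E) : Prop :=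
  G.src e ≠ G.tgt e ∧ G'.src (φ e) ≠ G'.tgt (φ e) ∧
  ∃ ψ : Quot (contractRel G e) ≃ Quot (contractRel G' (φ e)),
    ∀ f : G.E, f ≠ e →
      ((ψ (Quot.mk _ (G.src f)) = Quot.mk _ (G'.src (φ f)) ∧
        ψ (Quot.mk _ (G.tgt f)) = Quot.mk _ (G'.tgt (φ f))) ∨
       (ψ (Quot.mk _ (G.src f)) = Quot.mk _ (G'.tgt (φ f)) ∧
        ψ (Quot.mk _ (G.tgt f)) = Quot.mk _ (G'.src (φ f))))

/-- Move one edge from the chain `a` to the chain `b`. -/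
def moveWeight {E : Type} (w : E → ℕ) (a b : E) : E → ℕ :=
  fun g => if g = b then w b + 1 else if g = a then w a - 1 else w g

/-- The chains of maximal length. -/
def maxChains (D : Multigraph) (w : D.E → ℕ) : Finset D.E :=
  Finset.univ.filter fun e => ∀ f : D.E, w f ≤ w e

/-- The chains of minimal length. -/
def minChains (D : Multigraph) (w : D.E → ℕ) : Finset D.E :=
  Finset.univ.filter fun e => ∀ f : D.E, w e ≤ w f

/-- Degree of `v` within the edge set `S`. -/
def degIn (D : Multigraph) (S : Finset D.E) (v : D.V) : ℕ :=
  (S.filter fun e => D.src e = v).card + (S.filter fun e => D.tgt e = v).card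

/-- `S` is a matching (pairwise non-adjacent edges). -/
def IsMatchingIn (D : Multigraph) (S : Finset D.E) : Prop := ∀ v : D.V, degIn D S v ≤ 1

/-- `S` is a path with three edges. -/
def IsPath3In (D : Multigraph) (S : Finset D.E) : Prop :=
  S.card = 3 ∧ (∀ v : D.V, degIn D S v ≤ 2) ∧
    (Finset.univ.filter fun v : D.V => degIn D S v = 1).card = 2

/-- `S` is the disjoint union of a path with three edges and a single edge. -/
def IsPath3PlusEdgeIn (D : Multigraph) (S : Finset D.E) : Prop :=
  S.card = 4 ∧ (∀ v : D.V, degIn D S v ≤ 2) ∧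
    (Finset.univ.filter fun v : D.V => degIn D S v = 1).card = 4 ∧
    ∃ e ∈ S, degIn D S (D.src e) = 2 ∧ degIn D S (D.tgt e) = 2

/-- `S` is the disjoint union of two paths with two edges each. -/
def IsTwoPlusTwoIn (D : Multigraph) (S : Finset D.E) : Prop :=
  S.card = 4 ∧ (∀ v : D.V, degIn D S v ≤ 2) ∧
    (Finset.univ.filter fun v : D.V => degIn D S v = 1).card = 4 ∧
    ∀ e ∈ S, degIn D S (D.src e) = 1 ∨ degIn D S (D.tgt e) = 1

/-- Two edges sharing a vertex. -/
def AdjEdges (D : Multigraph) (a b : D.E) : Prop :=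
  ∃ v : D.V, (D.src a = v ∨ D.tgt a = v) ∧ (D.src b = v ∨ D.tgt b = v)

/-- The number of incidences of edges of weight `c` at the vertex `u`. -/
def incCount (D : Multigraph) (w : D.E → ℕ) (u : D.V) (c : ℕ) : ℕ :=
  (Finset.univ.filter fun e : D.E => D.src e = u ∧ w e = c).card +
    (Finset.univ.filter fun e : D.E => D.tgt e = u ∧ w e = c).card

/-- The `π^v`-value of the vertex `u`: the number of incident edges of weight `q + 1`
minus the number of incident edges of weight `q - 1`. -/
def piV (D : Multigraph) (w : D.E → ℕ) (q : ℕ) (u : D.V) : ℤ :=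
  (incCount D w u (q + 1) : ℤ) -
    (if q = 0 then 0 else (incCount D w u (q - 1) : ℤ))

/-- The `π^v`-values are balanced: pairwise differences at most one. -/
def BalancedPiV (D : Multigraph) (w : D.E → ℕ) (q : ℕ) : Prop :=
  ∀ u v : D.V, piV D w q u ≤ piV D w q v + 1

/-- The standard weight `q`, where `m = 3kq + r` with `-3k/2 < r ≤ 3k/2`. -/
def stdWeight (m k : ℕ) : ℕ := (2 * m + 3 * k - 1) / (6 * k)

/-- `w` is a balanced weighting of `D` of total size `m` (the implied weak
subdivision is the generic member of `ℬ_m(D)`). -/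
def IsBalancedWeighting (D : Multigraph) (w : D.E → ℕ) (m : ℕ) : Prop :=
  (∑ e : D.E, w e) = m ∧ BalancedWeights w ∧ ZeroAcyclic D w

/-- Every 3-bond of `D` is trivial (consists of the three edges at a single vertex). -/
def OnlyTrivialThreeBonds (D : Multigraph) : Prop :=
  ∀ F : Finset D.E, D.IsBond F → F.card = 3 →
    ∃ u : D.V, F = Finset.univ.filter fun e => D.src e = u ∨ D.tgt e = u

/-- The 3-dipole: two vertices joined by three parallel edges. -/
def dipole3 : Multigraph where
  V := Fin 2
  E := Fin 3
  src _ := 0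
  tgt _ := 1

/-- The complete graph `K₄`. -/
def K4 : Multigraph where
  V := Fin 4
  E := {p : Fin 4 × Fin 4 // p.1 < p.2}
  src p := p.1.1
  tgt p := p.1.2

/-- The complete bipartite graph `K_{3,3}`. -/
def K33 : Multigraph where
  V := Fin 3 ⊕ Fin 3
  E := Fin 3 × Fin 3
  src p := Sum.inl p.1
  tgt p := Sum.inr p.2

/-- The triangular prism `Π₃`; the edges `Sum.inr i` are the rungs. -/
def prism : Multigraph where
  V := Fin 3 × Bool
  E := (Fin 3 × Bool) ⊕ Fin 3
  src := fun e => match e with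
    | Sum.inl (i, b) => (i, b)
    | Sum.inr i => (i, false)
  tgt := fun e => match e with
    | Sum.inl (i, b) => (i + 1, b)
    | Sum.inr i => (i, true)

/-- The Wagner graph (the 4-Möbius ladder): the edges `Sum.inl i` are the rails
(the 8-cycle) and the edges `Sum.inr j` are the rungs. -/
def wagner : Multigraph where
  V := Fin 8
  E := Fin 8 ⊕ Fin 4
  src := fun e => match e with
    | Sum.inl i => i
    | Sum.inr j => ⟨j.val, by omega⟩
  tgt := fun e => match e with
    | Sum.inl i => i + 1
    | Sum.inr j => ⟨j.val + 4, by omega⟩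

/-- The Petersen graph. -/
def petersen : Multigraph where
  V := Fin 5 × Bool
  E := Fin 5 ⊕ Fin 5 ⊕ Fin 5
  src := fun e => match e with
    | Sum.inl i => (i, false)
    | Sum.inr (Sum.inl i) => (i, false)
    | Sum.inr (Sum.inr i) => (i, true)
  tgt := fun e => match e with
    | Sum.inl i => (i + 1, false)
    | Sum.inr (Sum.inl i) => (i, true)
    | Sum.inr (Sum.inr i) => (i + 2, true)

/-!
Replacing each edge `e` of `D` by a chain of `w e > 0` edges, a set of `i` edges of the subdivision
fails to disconnect it iff its edges lie in distinct chains and the `i` corresponding edges do not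
disconnect `D`. Hence the number of `i`-disconnections is `choose m i - esymm i w` plus the sum of
`∏ e ∈ F, w e` over the `i`-disconnections `F` of `D`. All balanced weightings over `D_k` with the
same `m` share the same multiset of weights, so minimizing `d_3` amounts to minimizing the last sum
for `i = 3`.

There the 3-disconnections of `D` are its 3-bonds: the stars of the vertices, and the nontrivial
3-bonds, each of which adds a positive amount. With `a = m / (3 * k)`, every weight is `a` or
`a + 1`, and a star with `n` edges of weight `a + 1` contributes `a ^ (3 - n) * (a + 1) ^ n`, which
is strictly convex in `n`. As the sum of `n` over all vertices is `2 * (m % (3 * k))`, the stars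
contribute least exactly when the numbers `n` are balanced. Both minima are attained by the Möbius
ladder, where the edges of weight `a + 1` are taken colour class by colour class from a proper
3-edge-colouring.
-/

namespace Multigraph

variable {G : Multigraph}

/-! ### Connectivity and cuts -/

lemma connOn_iff_forall_coloring {S : Finset G.E} :
    G.ConnOn S ↔ ∀ x : G.V → Prop,
      (∀ e ∈ S, (x (G.src e) ↔ x (G.tgt e))) → ∀ u v, x u ↔ x v := by
  refine ⟨fun h x hx u v => ?_, fun h u v => ?_⟩
  · induction h u v with
    | refl => rfl
    | tail _ hstep ih =>
      obtain ⟨e, he, ⟨rfl, rfl⟩ | ⟨rfl, rfl⟩⟩ := hstep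
      exacts [ih.trans (hx e he), ih.trans (hx e he).symm]
  · refine (h (Relation.ReflTransGen (G.stepOn S) u) (fun e he => ?_) u v).1 .refl
    exact ⟨fun hu => hu.tail ⟨e, he, .inl ⟨rfl, rfl⟩⟩, fun hu => hu.tail ⟨e, he, .inr ⟨rfl, rfl⟩⟩⟩

lemma mem_cutEdges {A : Finset G.V} {e : G.E} :
    e ∈ G.cutEdges A ↔ ¬ (G.src e ∈ A ↔ G.tgt e ∈ A) := by
  simp only [cutEdges, mem_filter, mem_univ, true_and]
  tauto

lemma cutEdges_compl (A : Finset G.V) : G.cutEdges Aᶜ = G.cutEdges A := by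
  ext e
  simp only [mem_cutEdges, mem_compl, not_iff_not]

lemma disconnects_iff_exists_isCut_subset {F : Finset G.E} :
    G.Disconnects F ↔ ∃ C ⊆ F, G.IsCut C := by
  simp only [Disconnects, connOn_iff_forall_coloring, mem_sdiff, mem_univ, true_and, not_forall]
  constructor
  · rintro ⟨x, hx, u, v, huv⟩
    refine ⟨G.cutEdges (univ.filter x), fun e he => ?_, univ.filter x, ?_, ?_, rfl⟩
    · by_contra heF
      exact mem_cutEdges.1 he (by simpa using hx e heF)
    · by_cases hu : x u
      · exact ⟨u, by simpa using hu⟩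
      · exact ⟨v, by simpa using (_root_.not_iff.1 huv).1 hu⟩
    · intro h
      have hall : ∀ z, x z := fun z => by simpa using h.ge (mem_univ z)
      exact huv (iff_of_true (hall u) (hall v))
  · rintro ⟨_, hC, A, ⟨u, hu⟩, hA, rfl⟩
    obtain ⟨v, hv⟩ := not_forall.1 (mt eq_univ_iff_forall.2 hA)
    refine ⟨(· ∈ A), fun e heF => ?_, u, v, fun h => hv (h.1 hu)⟩
    by_contra he
    exact heF (hC (mem_cutEdges.2 he))

lemma IsCut.disconnects {C : Finset G.E} (hC : G.IsCut C) : G.Disconnects C :=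
  disconnects_iff_exists_isCut_subset.2 ⟨C, Subset.rfl, hC⟩

lemma isBond_iff_disconnects {n : ℕ} (hG : ∀ F : Finset G.E, G.Disconnects F → n ≤ #F)
    {F : Finset G.E} (hF : #F = n) : G.IsBond F ↔ G.Disconnects F := by
  refine ⟨fun h => h.1.disconnects, fun h => ?_⟩
  have eq_of_isCut : ∀ C ⊆ F, G.IsCut C → C = F := fun C hCF hC =>
    eq_of_subset_of_card_le hCF (hF.le.trans (hG C hC.disconnects))
  obtain ⟨C, hCF, hC⟩ := disconnects_iff_exists_isCut_subset.1 h
  exact ⟨eq_of_isCut C hCF hC ▸ hC, eq_of_isCut⟩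

/-! ### Stars and degrees -/

/-- The star of `u`: the set of edges incident to `u`. -/
def star (G : Multigraph) (u : G.V) : Finset G.E :=
  univ.filter fun e => G.src e = u ∨ G.tgt e = u

/-- No edge of `G` is a loop. -/
def Loopless (G : Multigraph) : Prop := ∀ e : G.E, G.src e ≠ G.tgt e

lemma mem_star {u : G.V} {e : G.E} : e ∈ G.star u ↔ G.src e = u ∨ G.tgt e = u := by
  simp only [star, mem_filter, mem_univ, true_and]

lemma sum_degIn (S : Finset G.E) : ∑ u, degIn G S u = 2 * #S := by
  simp only [degIn, sum_add_distrib]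
  rw [← card_eq_sum_card_fiberwise (f := G.src) fun _ _ => mem_univ _,
    ← card_eq_sum_card_fiberwise (f := G.tgt) fun _ _ => mem_univ _, two_mul]

lemma degIn_univ (u : G.V) : degIn G univ u = G.deg u := rfl

lemma incCount_eq_degIn (w : G.E → ℕ) (u : G.V) (c : ℕ) :
    incCount G w u c = degIn G (univ.filter (w · = c)) u := by
  simp only [incCount, degIn, filter_filter, and_comm]

namespace Loopless

lemma degIn_eq (hG : G.Loopless) (S : Finset G.E) (u : G.V) :
    degIn G S u = #((G.star u).filter (· ∈ S)) := by
  rw [degIn, ← card_union_of_disjoint]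
  · congr 1
    ext e
    simp only [mem_union, mem_filter, mem_star]
    tauto
  · exact disjoint_filter.2 fun e _ hs ht => hG e (hs.trans ht.symm)

lemma card_star (hG : G.Loopless) (u : G.V) : #(G.star u) = G.deg u := by
  simp [← degIn_univ, hG.degIn_eq]

lemma cutEdges_singleton (hG : G.Loopless) (u : G.V) : G.cutEdges {u} = G.star u := by
  ext e
  have := hG e
  simp only [mem_cutEdges, mem_singleton, mem_star]
  grind

lemma isCut_star (hG : G.Loopless) (hV : 1 < Fintype.card G.V) (u : G.V) : G.IsCut (G.star u) :=
  ⟨{u}, singleton_nonempty u, fun h => by simpa [hV.ne] using congrArg card h,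
    (hG.cutEdges_singleton u).symm⟩

lemma star_injective (hG : G.Loopless) (hconn : G.Connected) (hV : 2 < Fintype.card G.V) :
    Function.Injective G.star := by
  intro u v huv
  by_contra hne
  obtain ⟨z, hz⟩ : ∃ z, z ∉ ({u, v} : Finset G.V) := by
    by_contra! h
    exact hV.not_ge ((card_le_card fun z _ => h z).trans card_le_two)
  have hmono : ∀ e, G.src e ∈ ({u, v} : Finset G.V) ↔ G.tgt e ∈ ({u, v} : Finset G.V) := by
    intro e
    have hu : e ∈ G.star u ↔ e ∈ G.star v := by rw [huv]
    have := hG e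
    simp only [mem_star] at hu
    simp only [mem_insert, mem_singleton]
    grind
  exact hz ((connOn_iff_forall_coloring.1 hconn (· ∈ ({u, v} : Finset G.V)) (fun e _ => hmono e)
    u z).1 (mem_insert_self u _))

end Loopless

lemma card_cutEdges_singleton_add_two_le_deg {e : G.E} (he : G.src e = G.tgt e) :
    #(G.cutEdges {G.src e}) + 2 ≤ G.deg (G.src e) := by
  set u := G.src e
  have hsub : G.cutEdges {u} ⊆ univ.filter (fun f => G.src f = u ∧ f ≠ e) ∪
      univ.filter (fun f => G.tgt f = u ∧ f ≠ e) := by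
    intro f hf
    simp only [mem_cutEdges, mem_singleton] at hf
    simp only [mem_union, mem_filter, mem_univ, true_and]
    grind
  have hcard : ∀ x : G.E → G.V, x e = u →
      #(univ.filter fun f => x f = u ∧ f ≠ e) + 1 = #(univ.filter fun f => x f = u) := by
    intro x h
    rw [← card_erase_add_one (show e ∈ univ.filter fun f => x f = u by simpa using h)]
    congr 2
    ext f
    simp [and_comm]
  have := (card_le_card hsub).trans (card_union_le _ _)
  have := hcard G.src rfl
  have := hcard G.tgt he.symm
  unfold deg
  omega

end Multigraph

namespace Multigraph

variable {D : Multigraph} {w : D.E → ℕ}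

/-! ### Disconnections of a subdivision -/

/-- The `i`-disconnections of `G`. -/
def disconnections (G : Multigraph) (i : ℕ) : Finset (Finset G.E) :=
  (powersetCard i univ).filter G.Disconnects

/-- The sum of `∏ e ∈ F, w e` over the `i`-disconnections `F` of `G`. When each edge `e` is
replaced by a chain of `w e` edges, this counts the disconnections obtained by choosing one edge
in each chain of an `i`-disconnection. -/
def disconnectionWeight (G : Multigraph) (i : ℕ) (w : G.E → ℕ) : ℕ :=
  ∑ F ∈ G.disconnections i, ∏ e ∈ F, w e

lemma mem_disconnections {G : Multigraph} {i : ℕ} {F : Finset G.E} :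
    F ∈ G.disconnections i ↔ #F = i ∧ G.Disconnects F := by
  simp only [disconnections, mem_filter, mem_powersetCard_univ]

lemma card_disconnections (G : Multigraph) (i : ℕ) : #(G.disconnections i) = G.d i := by
  rw [d]
  congr 1
  ext F
  simp only [mem_disconnections, mem_filter, mem_univ, true_and]

lemma chainNode_zero (e : D.E) : chainNode D w e 0 = .inl (Quot.mk _ (D.src e)) := by
  simp [chainNode]

lemma chainNode_length {e : D.E} (he : 0 < w e) :
    chainNode D w e (w e) = .inl (Quot.mk _ (D.tgt e)) := by
  simp [chainNode, he.ne']

lemma chainNode_succ {e : D.E} (i : Fin (w e - 1)) :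
    chainNode D w e (i + 1) = .inr ⟨e, i⟩ := by
  have := i.isLt
  rw [chainNode, dif_pos ⟨by omega, by omega⟩]
  rfl

/-- The edge of `D` that the chain containing `f` replaces. -/
def chain (f : (subdivide D w).E) : D.E := f.1

lemma connOn_subdivide_iff_forall_coloring {F : Finset (subdivide D w).E} :
    (subdivide D w).ConnOn (univ \ F) ↔ ∀ X : (subdivide D w).V → Prop,
      (∀ (e : D.E) (i : Fin (w e)), (⟨e, i⟩ : (subdivide D w).E) ∉ F →
        (X (chainNode D w e i) ↔ X (chainNode D w e (i + 1)))) → ∀ u v, X u ↔ X v := by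
  rw [connOn_iff_forall_coloring]
  refine forall_congr' fun X => imp_congr_left ⟨fun h e i hi => ?_, fun h f hf => ?_⟩
  · exact h ⟨e, i⟩ (mem_sdiff.2 ⟨mem_univ _, hi⟩)
  · exact h f.1 f.2 (mem_sdiff.1 hf).2

lemma injOn_chain_of_connOn_subdivide {F : Finset (subdivide D w).E}
    (hF : (subdivide D w).ConnOn (univ \ F)) :
    Set.InjOn chain (F : Set (subdivide D w).E) := by
  suffices h : ∀ (e : D.E) (i j : Fin (w e)), (⟨e, i⟩ : (subdivide D w).E) ∈ F →
      (⟨e, j⟩ : (subdivide D w).E) ∈ F → ¬ i < j by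
    rintro ⟨e, i⟩ hi ⟨_, j⟩ hj (rfl : e = _)
    rw [le_antisymm (not_lt.1 (h e j i hj hi)) (not_lt.1 (h e i j hi hj))]
  intro e i j hi hj hij
  -- The nodes strictly between the two deleted edges are separated from the rest of the graph.
  let X : (subdivide D w).V → Prop :=
    Sum.elim (fun _ => False) fun n => n.1 = e ∧ (i : ℕ) < n.2 + 1 ∧ (n.2 : ℕ) + 1 ≤ j
  have X_chainNode : ∀ f l, X (chainNode D w f l) ↔ f = e ∧ (i : ℕ) < l ∧ l ≤ j := by
    intro f l
    have := j.isLt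
    simp only [X, chainNode]
    split_ifs with h₁ h₂
    · simp only [Sum.elim_inr, Nat.sub_add_cancel h₁.1]
    all_goals
      simp only [Sum.elim_inl, false_iff]
      rintro ⟨rfl, _, _⟩
      omega
  have hX := connOn_subdivide_iff_forall_coloring.1 hF X fun f l hl => by
    rw [X_chainNode, X_chainNode]
    refine and_congr_right ?_
    rintro rfl
    have hli : (l : ℕ) ≠ i := fun h => hl (Fin.ext h ▸ hi)
    have hlj : (l : ℕ) ≠ j := fun h => hl (Fin.ext h ▸ hj)
    omega
  have := (hX (chainNode D w e (i + 1)) (chainNode D w e 0)).1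
    ((X_chainNode _ _).2 ⟨rfl, Nat.lt_succ_self _, hij⟩)
  exact Nat.not_lt_zero _ ((X_chainNode _ _).1 this).2.1

lemma connOn_of_connOn_subdivide (hw : ∀ e, 0 < w e) {F : Finset (subdivide D w).E}
    (hF : (subdivide D w).ConnOn (univ \ F)) : D.ConnOn (univ \ F.image chain) := by
  refine connOn_iff_forall_coloring.2 fun x hx u v => ?_
  let y (e : D.E) (j : ℕ) : Prop :=
    if ∃ i : Fin (w e), (i : ℕ) < j ∧ (⟨e, i⟩ : (subdivide D w).E) ∈ F then x (D.tgt e)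
    else x (D.src e)
  let X : (subdivide D w).V → Prop :=
    Sum.elim (Quot.lift x (by rintro _ _ ⟨e, he, -⟩; exact absurd he (hw e).ne'))
      fun n => y n.1 (n.2 + 1)
  have X_chainNode : ∀ e, ∀ j ≤ w e, X (chainNode D w e j) ↔ y e j := by
    intro e j hj
    simp only [X, chainNode]
    split_ifs with h₁ h₂
    · simp only [Sum.elim_inr, Nat.sub_add_cancel h₁.1]
    · simp [y, h₂]
    · obtain rfl : j = w e := by omega
      by_cases he : ∃ i : Fin (w e), (⟨e, i⟩ : (subdivide D w).E) ∈ F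
      · simp [y, he]
      · have he' : e ∉ F.image chain := by
          rintro h
          obtain ⟨⟨_, i⟩, hi, rfl⟩ := mem_image.1 h
          exact he ⟨i, hi⟩
        simpa [y, he] using (hx e (mem_sdiff.2 ⟨mem_univ e, he'⟩)).symm
  refine connOn_subdivide_iff_forall_coloring.1 hF X (fun e i hi => ?_)
    (.inl (Quot.mk _ u)) (.inl (Quot.mk _ v))
  rw [X_chainNode e i i.isLt.le, X_chainNode e (i + 1) i.isLt]
  have : (∃ l : Fin (w e), (l : ℕ) < i ∧ (⟨e, l⟩ : (subdivide D w).E) ∈ F) ↔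
      ∃ l : Fin (w e), (l : ℕ) < i + 1 ∧ (⟨e, l⟩ : (subdivide D w).E) ∈ F := by
    refine exists_congr fun l => and_congr_left fun hl => ?_
    have hli : (l : ℕ) ≠ i := fun h => hi (Fin.ext h ▸ hl)
    omega
  simp only [y, this]

lemma coloring_chainNode_iff {F : Finset (subdivide D w).E} {X : (subdivide D w).V → Prop}
    (hX : ∀ (e : D.E) (i : Fin (w e)), (⟨e, i⟩ : (subdivide D w).E) ∉ F →
      (X (chainNode D w e i) ↔ X (chainNode D w e (i + 1))))
    {e : D.E} {i j : ℕ} (hij : i ≤ j) (hj : j ≤ w e)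
    (hF : ∀ l : Fin (w e), i ≤ l → (l : ℕ) < j → (⟨e, l⟩ : (subdivide D w).E) ∉ F) :
    X (chainNode D w e i) ↔ X (chainNode D w e j) := by
  induction j, hij using Nat.le_induction with
  | base => rfl
  | succ j hij ih =>
    have hstep := hX e ⟨j, hj⟩ (hF ⟨j, hj⟩ hij j.lt_succ_self)
    exact (ih (Nat.le_of_succ_le hj) fun l hil hlj =>
      hF l hil (hlj.trans j.lt_succ_self)).trans hstep

lemma connOn_subdivide (hw : ∀ e, 0 < w e) {F : Finset (subdivide D w).E}
    (hinj : Set.InjOn chain (F : Set (subdivide D w).E))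
    (hD : D.ConnOn (univ \ F.image chain)) : (subdivide D w).ConnOn (univ \ F) := by
  refine connOn_subdivide_iff_forall_coloring.2 fun X hX => ?_
  let x (u : D.V) : Prop := X (.inl (Quot.mk _ u))
  have X_zero : ∀ e, X (chainNode D w e 0) ↔ x (D.src e) := fun e => by rw [chainNode_zero]
  have X_length : ∀ e, X (chainNode D w e (w e)) ↔ x (D.tgt e) := fun e => by
    rw [chainNode_length (hw e)]
  have hx : ∀ u v, x u ↔ x v := connOn_iff_forall_coloring.1 hD x fun e he => by
    rw [← X_zero, ← X_length]
    refine coloring_chainNode_iff hX (Nat.zero_le _) le_rfl fun l _ _ hl => ?_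
    exact (mem_sdiff.1 he).2 (mem_image_of_mem chain hl)
  have exists_iff : ∀ v, ∃ u, X v ↔ x u := by
    rintro (⟨⟨u⟩⟩ | ⟨e, i⟩)
    · exact ⟨u, Iff.rfl⟩
    rw [← chainNode_succ]
    by_cases hF : ∃ l : Fin (w e), (l : ℕ) < i + 1 ∧ (⟨e, l⟩ : (subdivide D w).E) ∈ F
    · obtain ⟨l, hli, hl⟩ := hF
      refine ⟨D.tgt e, (coloring_chainNode_iff hX (by omega) le_rfl fun l' hl' _ hmem => ?_).trans
        (X_length e)⟩
      cases hinj hl hmem rfl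
      omega
    · exact ⟨D.src e, (coloring_chainNode_iff hX (Nat.zero_le _) (by omega) fun l _ hl hmem =>
        hF ⟨l, hl, hmem⟩).symm.trans (X_zero e)⟩
  intro v v'
  obtain ⟨u, hu⟩ := exists_iff v
  obtain ⟨u', hu'⟩ := exists_iff v'
  exact hu.trans ((hx u u').trans hu'.symm)

theorem connOn_subdivide_iff (hw : ∀ e, 0 < w e) {F : Finset (subdivide D w).E} :
    (subdivide D w).ConnOn (univ \ F) ↔
      Set.InjOn chain (F : Set (subdivide D w).E) ∧ D.ConnOn (univ \ F.image chain) :=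
  ⟨fun h => ⟨injOn_chain_of_connOn_subdivide h, connOn_of_connOn_subdivide hw h⟩,
    fun h => connOn_subdivide hw h.1 h.2⟩

end Multigraph

/-! ### Counting disconnections -/

section Counting

variable {κ ι : Type*} [Fintype κ]

lemma card_injOn_image_eq (f : κ → ι) (s : Finset ι) :
    #{T : Finset κ | Set.InjOn f T ∧ T.image f = s} = ∏ i ∈ s, #{x | f x = i} := by
  have prod_eq : ∏ i ∈ s, #{x | f x = i} = #(univ : Finset (∀ i : s, {x // f x = i})) := by
    simp only [card_univ, Fintype.card_pi, Fintype.card_subtype,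
      prod_coe_sort s fun i => #{x | f x = i}]
  rw [prod_eq, eq_comm]
  have map_mem {g : ∀ i : s, {x // f x = i}} {x : κ} (hx : x ∈ univ.image fun i => (g i : κ)) :
      ∃ i : s, f x = i ∧ (g i : κ) = x := by
    obtain ⟨i, -, rfl⟩ := mem_image.1 hx
    exact ⟨i, (g i).2, rfl⟩
  refine card_bij (fun g _ => univ.image fun i => (g i : κ)) (fun g _ => ?_)
    (fun g _ g' _ hg => ?_) (fun T hT => ?_)
  · refine mem_filter.2 ⟨mem_univ _, fun x hx y hy hxy => ?_, ?_⟩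
    · obtain ⟨i, hi, rfl⟩ := map_mem hx
      obtain ⟨j, hj, rfl⟩ := map_mem hy
      rw [Subtype.ext (hi.symm.trans (hxy.trans hj))]
    · rw [image_image]
      exact (image_congr fun i _ => (g i).2).trans attach_image_val
  · funext i
    obtain ⟨j, hj, hgj⟩ := map_mem (hg ▸ mem_image_of_mem (fun i => (g i : κ)) (mem_univ i))
    obtain rfl : i = j := Subtype.ext ((g i).2.symm.trans hj)
    exact Subtype.ext hgj.symm
  · obtain ⟨hinj, rfl⟩ := (mem_filter.1 hT).2
    choose g hgT hg using fun i : T.image f => mem_image.1 i.2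
    refine ⟨fun i => ⟨g i, hg i⟩, mem_univ _, ?_⟩
    ext x
    refine ⟨fun hx => ?_, fun hx => ?_⟩
    · obtain ⟨i, -, rfl⟩ := map_mem hx
      exact hgT i
    · let i : T.image f := ⟨f x, mem_image_of_mem f hx⟩
      exact mem_image.2 ⟨i, mem_univ i, hinj (hgT i) hx (hg i)⟩

lemma card_injOn_image_mem (f : κ → ι) (𝓕 : Finset (Finset ι)) :
    #{T : Finset κ | Set.InjOn f T ∧ T.image f ∈ 𝓕} = ∑ s ∈ 𝓕, ∏ i ∈ s, #{x | f x = i} := by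
  rw [card_eq_sum_card_fiberwise (f := fun T => T.image f) (t := 𝓕)
    fun T hT => (mem_filter.1 hT).2.2]
  refine sum_congr rfl fun s hs => ?_
  rw [← card_injOn_image_eq, filter_filter]
  congr 1
  ext T
  simp only [mem_filter, mem_univ, true_and]
  exact ⟨fun h => ⟨h.1.1, h.2⟩, fun h => ⟨⟨h.1, h.2 ▸ hs⟩, h.2⟩⟩

end Counting

namespace Multigraph

variable {D : Multigraph} {w : D.E → ℕ}

lemma card_chain_eq (e : D.E) : #{f : (subdivide D w).E | chain f = e} = w e := by
  rw [← Fintype.card_subtype, ← Fintype.card_fin (w e)]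
  exact Fintype.card_congr (Equiv.sigmaSubtype e)

lemma card_E_subdivide : Fintype.card (subdivide D w).E = ∑ e, w e := by
  rw [← card_univ, card_eq_sum_card_fiberwise (f := chain) (t := univ) fun _ _ => mem_univ _]
  exact sum_congr rfl fun e _ => card_chain_eq e

theorem d_subdivide_add_esymm (hw : ∀ e, 0 < w e) (i : ℕ) :
    (subdivide D w).d i + (univ.val.map w).esymm i =
      (∑ e, w e).choose i + D.disconnectionWeight i w := by
  let A := (subdivide D w).disconnections i
  let B : Finset (Finset (subdivide D w).E) :=
    {T | Set.InjOn chain (T : Set (subdivide D w).E) ∧ T.image chain ∈ powersetCard i univ}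
  have mem_A : ∀ T, T ∈ A ↔ #T = i ∧ ¬ (Set.InjOn chain (T : Set (subdivide D w).E) ∧
      ¬ D.Disconnects (T.image chain)) := fun T => by
    rw [mem_disconnections, Disconnects, connOn_subdivide_iff hw, Disconnects, not_not]
  have mem_B : ∀ T, T ∈ B ↔ #T = i ∧ Set.InjOn chain (T : Set (subdivide D w).E) := by
    intro T
    simp only [B, mem_filter, mem_univ, true_and, mem_powersetCard_univ]
    exact ⟨fun h => ⟨card_image_of_injOn h.1 ▸ h.2, h.1⟩,
      fun h => ⟨h.2, (card_image_of_injOn h.2).trans h.1⟩⟩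
  have union_eq : A ∪ B = powersetCard i univ := by
    ext T
    rw [mem_union, mem_A, mem_B, mem_powersetCard_univ]
    tauto
  have inter_eq : A ∩ B = univ.filter fun T : Finset (subdivide D w).E =>
      Set.InjOn chain (T : Set (subdivide D w).E) ∧ T.image chain ∈ D.disconnections i := by
    ext T
    rw [mem_inter, mem_A, mem_B, mem_filter, mem_disconnections]
    have := @card_image_of_injOn _ _ T chain
    grind
  have card_inter : #(A ∩ B) = D.disconnectionWeight i w := by
    simp only [inter_eq, card_injOn_image_mem, card_chain_eq, disconnectionWeight]
  have card_B : #B = (univ.val.map w).esymm i := by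
    simp only [B, card_injOn_image_mem, card_chain_eq, esymm_map_val]
  rw [← card_disconnections, ← card_B, ← card_inter, ← card_union_add_card_inter, union_eq,
    card_powersetCard, card_univ, card_E_subdivide]

end Multigraph

/-! ### Balanced families and strict convexity -/

section Secant

variable {f : ℕ → ℤ} {c n : ℕ}

/-- The value at `n` of the affine function that agrees with `f` at `c` and `c + 1`. -/
def secant (f : ℕ → ℤ) (c n : ℕ) : ℤ := f c + ((n : ℤ) - c) * (f (c + 1) - f c)

lemma secant_self : secant f c c = f c := by simp [secant]

lemma secant_succ : secant f c (c + 1) = f (c + 1) := by simp [secant]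

lemma secant_lt_of_lt (hf : StrictMono fun n => f (n + 1) - f n) (h : n < c) :
    secant f c n < f n := by
  induction c, h using Nat.le_induction with
  | base =>
    have := hf n.lt_succ_self
    simp only [secant, Nat.succ_eq_add_one, Nat.cast_succ] at this ⊢
    linarith
  | succ c hc ih =>
    have hslope := hf c.lt_succ_self
    have : (n : ℤ) < c := by exact_mod_cast hc
    simp only [secant, Nat.succ_eq_add_one, Nat.cast_succ] at hslope ih ⊢
    nlinarith

lemma secant_lt_of_succ_lt (hf : StrictMono fun n => f (n + 1) - f n) (h : c + 1 < n) :
    secant f c n < f n := by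
  have hslope : ∀ n, c < n → f (c + 1) - f c < f (n + 1) - f n := fun n hn => hf hn
  induction n, h using Nat.le_induction with
  | base =>
    have := hslope (c + 1) c.lt_succ_self
    simp only [secant, Nat.succ_eq_add_one, Nat.cast_succ] at this ⊢
    linarith
  | succ n hn ih =>
    have := hslope n (by omega)
    simp only [secant, Nat.cast_succ] at this ih ⊢
    linarith

lemma secant_eq_iff (hf : StrictMono fun n => f (n + 1) - f n) :
    secant f c n = f n ↔ n = c ∨ n = c + 1 := by
  refine ⟨fun h => ?_, ?_⟩
  · by_contra! hn
    rcases lt_or_ge n c with hc | hc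
    · exact (secant_lt_of_lt hf hc).ne h
    · exact (secant_lt_of_succ_lt hf (by omega)).ne h
  · rintro (rfl | rfl)
    exacts [secant_self, secant_succ]

lemma secant_le (hf : StrictMono fun n => f (n + 1) - f n) (c n : ℕ) : secant f c n ≤ f n := by
  by_cases h : n = c ∨ n = c + 1
  · exact ((secant_eq_iff hf).2 h).le
  · rcases lt_or_ge n c with hc | hc
    · exact (secant_lt_of_lt hf hc).le
    · exact (secant_lt_of_succ_lt hf (by omega)).le

lemma sum_secant {ι : Type*} [Fintype ι] (s : ι → ℕ) :
    ∑ i, secant f c (s i) = Fintype.card ι * f c +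
      ((∑ i, s i : ℕ) - Fintype.card ι * c) * (f (c + 1) - f c) := by
  simp only [secant, sum_add_distrib, ← sum_mul, sum_sub_distrib, sum_const, card_univ,
    nsmul_eq_mul, Nat.cast_sum]

end Secant

namespace BalancedWeights

variable {ι ι' : Type} [Fintype ι] [Fintype ι'] {w : ι → ℕ} {w' : ι' → ℕ}

lemma of_eq_or_eq_succ {ι : Type} {w : ι → ℕ} {a : ℕ} (h : ∀ i, w i = a ∨ w i = a + 1) :
    BalancedWeights w := fun i j => by
  have := h i
  have := h j
  omega

lemma eq_or_eq_succ (hw : BalancedWeights w) (i : ι) :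
    w i = (∑ j, w j) / Fintype.card ι ∨ w i = (∑ j, w j) / Fintype.card ι + 1 := by
  set a := (∑ j, w j) / Fintype.card ι
  have sum_const_eq : ∀ c : ℕ, ∑ _j : ι, c = c * Fintype.card ι := fun c => by simp [mul_comm]
  have not_lt : ¬ w i < a := fun h => by
    have : ∑ j, w j < ∑ _j : ι, a :=
      sum_lt_sum (fun j _ => (hw j i).trans h) ⟨i, mem_univ i, h⟩
    exact this.not_ge ((sum_const_eq a).trans_le (Nat.div_mul_le_self _ _))
  have not_gt : ¬ a + 1 < w i := fun h => by
    have : ∑ _j : ι, (a + 1) ≤ ∑ j, w j :=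
      sum_le_sum fun j _ => Nat.le_of_lt_succ (h.trans_le (hw i j))
    have hcard : 0 < Fintype.card ι := Fintype.card_pos_iff.2 ⟨i⟩
    exact (this.trans_lt (Nat.lt_mul_of_div_lt a.lt_succ_self hcard)).ne (sum_const_eq _)
  omega

lemma card_filter_eq_succ (hw : BalancedWeights w) :
    #{i | w i = (∑ j, w j) / Fintype.card ι + 1} = (∑ j, w j) % Fintype.card ι := by
  set a := (∑ j, w j) / Fintype.card ι with ha
  have hsum : ∑ j, w j = Fintype.card ι * a + #{i | w i = a + 1} := by
    rw [card_filter, ← card_univ, ← smul_eq_mul, ← sum_const, ← sum_add_distrib]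
    refine sum_congr rfl fun i _ => ?_
    rcases hw.eq_or_eq_succ i with h | h <;> rw [← ha] at h <;> simp [h]
  exact Nat.add_left_cancel (hsum.symm.trans (Nat.div_add_mod _ _).symm)

lemma map_eq_replicate_add_replicate (hw : BalancedWeights w) :
    univ.val.map w =
      Multiset.replicate ((∑ j, w j) % Fintype.card ι) ((∑ j, w j) / Fintype.card ι + 1) +
      Multiset.replicate (Fintype.card ι - (∑ j, w j) % Fintype.card ι)
        ((∑ j, w j) / Fintype.card ι) := by
  set a := (∑ j, w j) / Fintype.card ι with ha
  have hr := hw.card_filter_eq_succ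
  rw [← ha] at hr
  rw [← hr, ← Multiset.filter_add_not (fun i => w i = a + 1) univ.val, Multiset.map_add]
  congr 1
  · refine Multiset.eq_replicate.2 ⟨Multiset.card_map _ _, fun b hb => ?_⟩
    obtain ⟨i, hi, rfl⟩ := Multiset.mem_map.1 hb
    exact (Multiset.mem_filter.1 hi).2
  · refine Multiset.eq_replicate.2 ⟨?_, fun b hb => ?_⟩
    · rw [Multiset.card_map, ← filter_val, card_val, ← card_univ, filter_not,
        card_sdiff_of_subset (filter_subset _ _)]
    · obtain ⟨i, hi, rfl⟩ := Multiset.mem_map.1 hb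
      exact (hw.eq_or_eq_succ i).resolve_right (Multiset.mem_filter.1 hi).2

lemma map_eq_map (hw : BalancedWeights w) (hw' : BalancedWeights w')
    (hcard : Fintype.card ι = Fintype.card ι') (hsum : ∑ i, w i = ∑ i, w' i) :
    univ.val.map w = univ.val.map w' := by
  rw [hw.map_eq_replicate_add_replicate, hw'.map_eq_replicate_add_replicate, hcard, hsum]

section Convex

variable {f : ℕ → ℤ}

lemma sum_secant_eq_sum_comp (hw : BalancedWeights w)
    (hf : StrictMono fun n => f (n + 1) - f n) (hcard : Fintype.card ι = Fintype.card ι')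
    (hsum : ∑ i, w i = ∑ i, w' i) :
    ∑ i, secant f ((∑ j, w' j) / Fintype.card ι') (w' i) = ∑ i, f (w i) := by
  rw [sum_secant, ← hsum, ← hcard, ← sum_secant]
  exact sum_congr rfl fun i _ => (secant_eq_iff hf).2 (hw.eq_or_eq_succ i)

theorem sum_comp_le_sum_comp (hw : BalancedWeights w)
    (hf : StrictMono fun n => f (n + 1) - f n) (hcard : Fintype.card ι = Fintype.card ι')
    (hsum : ∑ i, w i = ∑ i, w' i) : ∑ i, f (w i) ≤ ∑ i, f (w' i) := by
  rw [← hw.sum_secant_eq_sum_comp hf hcard hsum]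
  exact sum_le_sum fun i _ => secant_le hf _ _

theorem sum_comp_eq_sum_comp_iff (hw : BalancedWeights w)
    (hf : StrictMono fun n => f (n + 1) - f n) (hcard : Fintype.card ι = Fintype.card ι')
    (hsum : ∑ i, w i = ∑ i, w' i) : ∑ i, f (w i) = ∑ i, f (w' i) ↔ BalancedWeights w' := by
  rw [← hw.sum_secant_eq_sum_comp hf hcard hsum, sum_eq_sum_iff_of_le fun i _ => secant_le hf _ _]
  simp only [mem_univ, true_imp_iff, secant_eq_iff hf]
  exact ⟨of_eq_or_eq_succ, eq_or_eq_succ⟩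

end Convex

end BalancedWeights

/-! ### Graphs in `D_k`: stars and trivial 3-bonds -/

/-- The part of `Multigraph.disconnectionWeight` that is contributed by the stars. -/
def Multigraph.starWeight (D : Multigraph) (w : D.E → ℕ) : ℕ := ∑ u, ∏ e ∈ D.star u, w e

namespace memDk

variable {k : ℕ} {D : Multigraph}

lemma card_V (hD : memDk k D) : Fintype.card D.V = 2 * k := by
  obtain ⟨-, hdeg, -, hcard⟩ := hD
  have := Multigraph.sum_degIn (G := D) univ
  simp only [Multigraph.degIn_univ, hdeg, sum_const, card_univ, smul_eq_mul] at this
  simp only [Multigraph.nE, Multigraph.nV] at hcard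
  omega

lemma card_E (hD : memDk k D) : Fintype.card D.E = 3 * k := by
  have := hD.card_V
  have := hD.2.2.2
  simp only [Multigraph.nE, Multigraph.nV] at this
  omega

lemma loopless (hD : memDk k D) (hk : 2 ≤ k) : D.Loopless := by
  intro e he
  have hcut : D.IsCut (D.cutEdges {D.src e}) := by
    refine ⟨_, singleton_nonempty _, fun h => ?_, rfl⟩
    have := congrArg card h
    rw [card_singleton, card_univ, hD.card_V] at this
    omega
  have := hD.2.2.1 _ hcut.disconnects
  have := Multigraph.card_cutEdges_singleton_add_two_le_deg he
  have := hD.2.1 (D.src e)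
  omega

lemma card_star (hD : memDk k D) (hk : 2 ≤ k) (u : D.V) : #(D.star u) = 3 :=
  ((hD.loopless hk).card_star u).trans (hD.2.1 u)

lemma image_star_subset_disconnections (hD : memDk k D) (hk : 2 ≤ k) :
    univ.image D.star ⊆ D.disconnections 3 := by
  refine image_subset_iff.2 fun u _ => Multigraph.mem_disconnections.2 ⟨hD.card_star hk u, ?_⟩
  exact ((hD.loopless hk).isCut_star (by rw [hD.card_V]; omega) u).disconnects

lemma disconnections_subset_image_star_iff (hD : memDk k D) :
    D.disconnections 3 ⊆ univ.image D.star ↔ OnlyTrivialThreeBonds D := by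
  have mem_image_star (F : Finset D.E) : F ∈ univ.image D.star ↔
      ∃ u, F = univ.filter fun e => D.src e = u ∨ D.tgt e = u := by
    simp only [mem_image, mem_univ, true_and, Multigraph.star, eq_comm]
  refine forall_congr' fun F => ?_
  rw [Multigraph.mem_disconnections, mem_image_star]
  have isBond_iff := @Multigraph.isBond_iff_disconnects D 3 hD.2.2.1 F
  exact ⟨fun h hF hcard => h ⟨hcard, (isBond_iff hcard).1 hF⟩,
    fun h ⟨hcard, hF⟩ => h ((isBond_iff hcard).2 hF) hcard⟩

lemma sum_image_star (hD : memDk k D) (hk : 2 ≤ k) (w : D.E → ℕ) :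
    ∑ F ∈ univ.image D.star, ∏ e ∈ F, w e = D.starWeight w :=
  sum_image ((hD.loopless hk).star_injective hD.1 (by rw [hD.card_V]; omega)).injOn

lemma starWeight_le_disconnectionWeight (hD : memDk k D) (hk : 2 ≤ k) (w : D.E → ℕ) :
    D.starWeight w ≤ D.disconnectionWeight 3 w := by
  rw [← hD.sum_image_star hk]
  exact sum_le_sum_of_subset (hD.image_star_subset_disconnections hk)

lemma starWeight_eq_disconnectionWeight_iff (hD : memDk k D) (hk : 2 ≤ k) {w : D.E → ℕ}
    (hw : ∀ e, 0 < w e) :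
    D.starWeight w = D.disconnectionWeight 3 w ↔ OnlyTrivialThreeBonds D := by
  have hsub := hD.image_star_subset_disconnections hk
  rw [← hD.disconnections_subset_image_star_iff, ← hD.sum_image_star hk]
  refine ⟨fun h F hF => ?_, fun h => ?_⟩
  · by_contra hF'
    exact (sum_lt_sum_of_subset hsub hF hF' (prod_pos fun e _ => hw e) fun _ _ _ => zero_le).ne h
  · rw [hsub.antisymm h, Multigraph.disconnectionWeight]

end memDk

/-! ### Balanced weightings -/

/-- The product of three weights of which `n` are equal to `a + 1` and the others to `a`. The
truncated subtraction is harmless: the extension to `3 < n` is still strictly convex. -/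
def weightProduct (a n : ℕ) : ℤ := (a : ℤ) ^ (3 - n) * (a + 1) ^ n

lemma weightProduct_strictConvex {a : ℕ} (ha : 0 < a) :
    StrictMono fun n => weightProduct a (n + 1) - weightProduct a n := by
  have ha' : (0 : ℤ) < a := by exact_mod_cast ha
  refine strictMono_nat_of_lt_succ fun n => ?_
  rw [← sub_pos]
  match n with
  | 0 =>
    calc (0 : ℤ) < a := ha'
      _ = _ := by norm_num [weightProduct]; ring
  | 1 =>
    calc (0 : ℤ) < a + 1 := by positivity
      _ = _ := by norm_num [weightProduct]; ring
  | 2 =>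
    calc (0 : ℤ) < (a + 1) ^ 2 * (a * (a + 1) - 1) := mul_pos (by positivity) (by nlinarith)
      _ = _ := by norm_num [weightProduct]; ring
  | n + 3 =>
    calc (0 : ℤ) < a ^ 2 * (a + 1) ^ (n + 3) := by positivity
      _ = _ := by norm_num [weightProduct, Nat.sub_eq_zero_of_le]; ring

namespace Multigraph

variable {D : Multigraph}

lemma degIn_add_degIn_compl (S : Finset D.E) (u : D.V) :
    degIn D S u + degIn D Sᶜ u = D.deg u := by
  have card_add : ∀ p : D.E → Prop, #(S.filter p) + #(Sᶜ.filter p) = #(univ.filter p) := by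
    intro p
    rw [← card_union_of_disjoint (disjoint_filter_filter disjoint_compl_right), ← filter_union,
      union_compl]
  have := card_add (D.src · = u)
  have := card_add (D.tgt · = u)
  unfold degIn deg
  omega

lemma incCount_eq_zero {w : D.E → ℕ} {c : ℕ} (h : ∀ e, w e ≠ c) (u : D.V) :
    incCount D w u c = 0 := by
  simp [incCount, h]

lemma incCount_add_incCount {w : D.E → ℕ} {c c' : ℕ} (hcc' : c ≠ c')
    (h : ∀ e, w e = c ∨ w e = c') (u : D.V) :
    incCount D w u c + incCount D w u c' = D.deg u := by
  have : univ.filter (w · = c') = (univ.filter (w · = c))ᶜ := by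
    ext e
    have := h e
    simp only [mem_compl, mem_filter, mem_univ, true_and]
    grind
  rw [incCount_eq_degIn, incCount_eq_degIn, this, degIn_add_degIn_compl]

end Multigraph

namespace IsBalancedWeighting

variable {k m : ℕ} {D D' : Multigraph} {w : D.E → ℕ} {w' : D'.E → ℕ}

lemma eq_or_eq_succ (hw : IsBalancedWeighting D w m) (hD : memDk k D) (e : D.E) :
    w e = m / (3 * k) ∨ w e = m / (3 * k) + 1 := by
  simpa only [hw.1, hD.card_E] using hw.2.1.eq_or_eq_succ e

lemma pos (hw : IsBalancedWeighting D w m) (hD : memDk k D) (hm : 3 * k ≤ m) (e : D.E) :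
    0 < w e := by
  have : 0 < m / (3 * k) := Nat.div_pos hm (hD.card_E ▸ Fintype.card_pos_iff.2 ⟨e⟩)
  have := hw.eq_or_eq_succ hD e
  omega

theorem d_subdivide_le_iff (hw : IsBalancedWeighting D w m) (hw' : IsBalancedWeighting D' w' m)
    (hD : memDk k D) (hD' : memDk k D') (hm : 3 * k ≤ m) (i : ℕ) :
    (subdivide D w).d i ≤ (subdivide D' w').d i ↔
      D.disconnectionWeight i w ≤ D'.disconnectionWeight i w' := by
  have h := Multigraph.d_subdivide_add_esymm (hw.pos hD hm) i
  have h' := Multigraph.d_subdivide_add_esymm (hw'.pos hD' hm) i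
  have hmap : univ.val.map w = univ.val.map w' :=
    hw.2.1.map_eq_map hw'.2.1 (hD.card_E.trans hD'.card_E.symm) (hw.1.trans hw'.1.symm)
  rw [hmap, hw.1] at h
  rw [hw'.1] at h'
  omega

lemma sum_incCount (hw : IsBalancedWeighting D w m) (hD : memDk k D) :
    ∑ u, incCount D w u (m / (3 * k) + 1) = 2 * (m % (3 * k)) := by
  have := hw.2.1.card_filter_eq_succ
  rw [hw.1, hD.card_E] at this
  simp only [Multigraph.incCount_eq_degIn, Multigraph.sum_degIn, this]

lemma prod_star (hw : IsBalancedWeighting D w m) (hD : memDk k D) (hk : 2 ≤ k) (u : D.V) :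
    ((∏ e ∈ D.star u, w e : ℕ) : ℤ) =
      weightProduct (m / (3 * k)) (incCount D w u (m / (3 * k) + 1)) := by
  set a := m / (3 * k)
  have hcard : #((D.star u).filter (w · = a + 1)) = incCount D w u (a + 1) := by
    simp [Multigraph.incCount_eq_degIn, (hD.loopless hk).degIn_eq]
  have hcard' := card_filter_add_card_filter_not (s := D.star u) (w · = a + 1)
  have light : ∀ e ∈ (D.star u).filter (¬ w · = a + 1), w e = a := fun e he =>
    (hw.eq_or_eq_succ hD e).resolve_right (mem_filter.1 he).2
  rw [hcard, hD.card_star hk] at hcard'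
  rw [← prod_filter_mul_prod_filter_not _ (w · = a + 1), prod_congr rfl light,
    prod_congr rfl fun e he => (mem_filter.1 he).2, prod_const, prod_const, hcard,
    Nat.eq_sub_of_add_eq' hcard', weightProduct]
  push_cast
  ring

lemma starWeight_eq (hw : IsBalancedWeighting D w m) (hD : memDk k D) (hk : 2 ≤ k) :
    (D.starWeight w : ℤ) =
      ∑ u, weightProduct (m / (3 * k)) (incCount D w u (m / (3 * k) + 1)) := by
  rw [Multigraph.starWeight, Nat.cast_sum]
  exact sum_congr rfl fun u _ => hw.prod_star hD hk u

end IsBalancedWeighting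

lemma stdWeight_eq {k : ℕ} (hk : 0 < k) (m : ℕ) :
    stdWeight m k = if 2 * (m % (3 * k)) ≤ 3 * k then m / (3 * k) else m / (3 * k) + 1 := by
  have hdiv := Nat.div_add_mod m (3 * k)
  have hlt := Nat.mod_lt m (show 0 < 3 * k by omega)
  set a := m / (3 * k)
  set b := m % (3 * k)
  have : 2 * m = 6 * k * a + 2 * b := by rw [← hdiv]; ring
  split_ifs <;> rw [stdWeight, Nat.div_eq_iff (by omega)] <;> constructor <;> lia

namespace IsBalancedWeighting

variable {k m : ℕ} {D D' : Multigraph} {w : D.E → ℕ} {w' : D'.E → ℕ}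

lemma exists_piV_eq (hw : IsBalancedWeighting D w m) (hD : memDk k D) (hk : 0 < k) :
    ∃ c : ℤ, ∀ u, piV D w (stdWeight m k) u = incCount D w u (m / (3 * k) + 1) - c := by
  set a := m / (3 * k) with ha
  have ha' : ∀ e, w e = a ∨ w e = a + 1 := hw.eq_or_eq_succ hD
  rw [stdWeight_eq hk, ← ha]
  clear_value a
  split_ifs
  · refine ⟨0, fun u => ?_⟩
    rw [piV, sub_right_inj]
    refine ite_eq_left_iff.2 fun h => ?_
    have : incCount D w u (a - 1) = 0 :=
      Multigraph.incCount_eq_zero (fun e => by have := ha' e; omega) u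
    rw [this, Nat.cast_zero]
  · refine ⟨3, fun u => ?_⟩
    have := Multigraph.incCount_add_incCount (Nat.lt_add_one a).ne ha' u
    rw [hD.2.1 u] at this
    rw [piV, if_neg a.succ_ne_zero, Nat.add_sub_cancel,
      Multigraph.incCount_eq_zero fun e => by have := ha' e; omega]
    omega

lemma balancedPiV_iff (hw : IsBalancedWeighting D w m) (hD : memDk k D) (hk : 0 < k) :
    BalancedPiV D w (stdWeight m k) ↔
      BalancedWeights fun u => incCount D w u (m / (3 * k) + 1) := by
  obtain ⟨c, hc⟩ := hw.exists_piV_eq hD hk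
  refine forall₂_congr fun u v => ?_
  rw [hc, hc]
  beta_reduce
  omega

theorem starWeight_le (hw : IsBalancedWeighting D w m) (hw' : IsBalancedWeighting D' w' m)
    (hD : memDk k D) (hD' : memDk k D') (hk : 2 ≤ k) (hm : 3 * k ≤ m)
    (hπ : BalancedPiV D w (stdWeight m k)) : D.starWeight w ≤ D'.starWeight w' := by
  have h := ((hw.balancedPiV_iff hD (by omega)).1 hπ).sum_comp_le_sum_comp
    (weightProduct_strictConvex (Nat.div_pos hm (by omega)))
    (hD.card_V.trans hD'.card_V.symm) ((hw.sum_incCount hD).trans (hw'.sum_incCount hD').symm)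
  rw [← hw.starWeight_eq hD hk, ← hw'.starWeight_eq hD' hk] at h
  exact_mod_cast h

theorem starWeight_eq_iff (hw : IsBalancedWeighting D w m) (hw' : IsBalancedWeighting D' w' m)
    (hD : memDk k D) (hD' : memDk k D') (hk : 2 ≤ k) (hm : 3 * k ≤ m)
    (hπ : BalancedPiV D w (stdWeight m k)) :
    D.starWeight w = D'.starWeight w' ↔ BalancedPiV D' w' (stdWeight m k) := by
  rw [hw'.balancedPiV_iff hD' (by omega),
    ← ((hw.balancedPiV_iff hD (by omega)).1 hπ).sum_comp_eq_sum_comp_iff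
      (weightProduct_strictConvex (Nat.div_pos hm (by omega)))
      (hD.card_V.trans hD'.card_V.symm) ((hw.sum_incCount hD).trans (hw'.sum_incCount hD').symm),
    ← hw.starWeight_eq hD hk, ← hw'.starWeight_eq hD' hk, Nat.cast_inj]

end IsBalancedWeighting

/-! ### Balanced weightings from proper edge colourings -/

/-- `c` is a proper edge colouring of `D` with three colours: edges with a common end have
different colours. -/
def Multigraph.IsProperEdgeColoring {D : Multigraph} (c : D.E → Fin 3) : Prop :=
  ∀ u, Set.InjOn c (D.star u)

lemma zeroAcyclic_of_pos {D : Multigraph} {w : D.E → ℕ} (hw : ∀ e, 0 < w e) :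
    ZeroAcyclic D w := by
  have hrel : ∀ u v, zeroRel D w u v → u = v := fun u v ⟨e, he, _⟩ => absurd he (hw e).ne'
  have : univ.filter (w · = 0) = ∅ := filter_false_of_mem fun e _ => (hw e).ne'
  rw [ZeroAcyclic, this, card_empty, Nat.add_zero]
  exact Fintype.card_congr
    ⟨Quot.lift id hrel, Quot.mk _, Quot.ind fun _ => rfl, fun _ => rfl⟩

namespace Multigraph.IsProperEdgeColoring

variable {D : Multigraph} {c : D.E → Fin 3}

lemma deg_eq_three (hc : IsProperEdgeColoring c) (hD : D.Loopless)
    (hcard : 2 * Fintype.card D.E = 3 * Fintype.card D.V) (u : D.V) : D.deg u = 3 := by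
  have deg_le : ∀ v ∈ univ, D.deg v ≤ 3 := fun v _ =>
    (hD.card_star v).ge.trans (card_le_card_of_injOn c (fun _ _ => mem_univ _) (hc v))
  refine (sum_eq_sum_iff_of_le deg_le).1 ?_ u (mem_univ u)
  have := sum_degIn (G := D) univ
  simp only [degIn_univ, card_univ] at this
  rw [this, sum_const, card_univ, smul_eq_mul]
  omega

lemma card_filter_star_lt (hc : IsProperEdgeColoring c) {u : D.V} (hu : #(D.star u) = 3)
    {j : ℕ} (hj : j ≤ 3) : #((D.star u).filter fun e => (c e : ℕ) < j) = j := by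
  have himage : (D.star u).image c = univ := by
    rw [← card_eq_iff_eq_univ, card_image_of_injOn (hc u), hu, Fintype.card_fin]
  calc #((D.star u).filter fun e => (c e : ℕ) < j)
    _ = #(((D.star u).image c).filter fun i : Fin 3 => (i : ℕ) < j) := by
      rw [filter_image, card_image_of_injOn ((hc u).mono (filter_subset _ _))]
    _ = j := by
      rw [himage, Fin.card_filter_val_lt, min_eq_right hj]

lemma card_filter_lt (hc : IsProperEdgeColoring c) {k : ℕ} (hD : memDk k D) (hk : 2 ≤ k)
    {j : ℕ} (hj : j ≤ 3) : #(univ.filter fun e => (c e : ℕ) < j) = k * j := by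
  have h := sum_degIn (univ.filter fun e => (c e : ℕ) < j)
  simp only [(hD.loopless hk).degIn_eq, mem_filter, mem_univ, true_and,
    hc.card_filter_star_lt (hD.card_star hk _) hj, sum_const, card_univ, hD.card_V,
    smul_eq_mul] at h
  lia

-- `H` fills up the colour classes one after the other, so that its degree at every vertex is the
-- number of full classes or one more.
lemma exists_balancedWeights_degIn (hc : IsProperEdgeColoring c) {k : ℕ} (hD : memDk k D)
    (hk : 2 ≤ k) {b : ℕ} (hb : b < 3 * k) : ∃ H, #H = b ∧ BalancedWeights (degIn D H) := by
  set j := b / k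
  have hj : j < 3 := Nat.div_lt_of_lt_mul (by lia)
  have hjb : k * j ≤ b := Nat.mul_div_le b k
  have hbj : b ≤ k * (j + 1) := (Nat.lt_mul_div_succ b (by omega)).le
  obtain ⟨H, hjH, hHj, hH⟩ := exists_subsuperset_card_eq
    (monotone_filter_right univ fun e _ (he : (c e : ℕ) < j) => he.trans (Nat.lt_add_one j))
    ((hc.card_filter_lt hD hk hj.le).trans_le hjb)
    (hbj.trans_eq (hc.card_filter_lt hD hk (Nat.succ_le_of_lt hj)).symm)
  have bounds : ∀ u, j ≤ degIn D H u ∧ degIn D H u ≤ j + 1 := by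
    intro u
    rw [(hD.loopless hk).degIn_eq]
    constructor
    · calc j = #((D.star u).filter fun e => (c e : ℕ) < j) :=
          (hc.card_filter_star_lt (hD.card_star hk u) hj.le).symm
        _ ≤ #((D.star u).filter (· ∈ H)) :=
          card_le_card (monotone_filter_right _ fun e _ he => hjH (by simpa using he))
    · calc #((D.star u).filter (· ∈ H))
        _ ≤ #((D.star u).filter fun e => (c e : ℕ) < j + 1) :=
          card_le_card (monotone_filter_right _ fun e _ he => by simpa using hHj he)
        _ = j + 1 := hc.card_filter_star_lt (hD.card_star hk u) (Nat.succ_le_of_lt hj)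
  refine ⟨H, hH, fun u v => ?_⟩
  have := bounds u
  have := bounds v
  omega

end Multigraph.IsProperEdgeColoring

lemma memDk.exists_balancedPiV {k m : ℕ} {D : Multigraph} (hD : memDk k D) (hk : 0 < k)
    (hm : 3 * k ≤ m) {H : Finset D.E} (hH : #H = m % (3 * k))
    (hbal : BalancedWeights (degIn D H)) :
    ∃ w, IsBalancedWeighting D w m ∧ BalancedPiV D w (stdWeight m k) := by
  set w : D.E → ℕ := fun e => m / (3 * k) + if e ∈ H then 1 else 0
  have hw : IsBalancedWeighting D w m := by
    refine ⟨?_, fun e f => by grind, zeroAcyclic_of_pos fun e => ?_⟩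
    · rw [sum_add_distrib, sum_const, card_univ, hD.card_E, smul_eq_mul, sum_boole,
        filter_univ_mem, hH]
      exact Nat.div_add_mod m (3 * k)
    · exact Nat.add_pos_left (Nat.div_pos hm (by omega)) _
  have heavy : univ.filter (w · = m / (3 * k) + 1) = H := by
    ext e
    simp [w]
  refine ⟨w, hw, (hw.balancedPiV_iff hD hk).2 ?_⟩
  simpa only [Multigraph.incCount_eq_degIn, heavy] using hbal

/-! ### The Möbius ladder -/

lemma exists_forall_Icc_and_not_succ {y : ℕ → Prop} {a b : ℕ} (hab : a ≤ b) (ha : y a)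
    (hb : ¬ y b) : ∃ i, a ≤ i ∧ i < b ∧ (∀ j ∈ Icc a i, y j) ∧ ¬ y (i + 1) := by
  have hlt : a < b := hab.lt_of_ne fun h => hb (h ▸ ha)
  obtain ⟨c, rfl⟩ := Nat.exists_eq_add_one_of_ne_zero (Nat.ne_zero_of_lt hlt)
  have hex : ∃ i, a ≤ i ∧ ¬ y (i + 1) := ⟨c, Nat.lt_add_one_iff.1 hlt, hb⟩
  obtain ⟨hai, hi⟩ := Nat.find_spec hex
  have hic : Nat.find hex ≤ c := Nat.find_min' hex ⟨Nat.lt_add_one_iff.1 hlt, hb⟩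
  refine ⟨Nat.find hex, hai, Nat.lt_add_one_iff.2 hic, fun j hj => ?_, hi⟩
  obtain ⟨haj, hji⟩ := mem_Icc.1 hj
  obtain rfl | ⟨l, rfl⟩ : j = a ∨ ∃ l, j = l + 1 := by cases j <;> grind
  · exact ha
  · by_cases hal : a ≤ l
    · by_contra hl
      exact Nat.find_min hex hji ⟨hal, hl⟩
    · rwa [show l + 1 = a by omega]

lemma four_le_card_changes_or_eq_Ioc {S : Finset ℕ} {N : ℕ} (h0 : 0 ∉ S) (hS : S.Nonempty)
    (hSN : ∀ i ∈ S, i < N) :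
    4 ≤ #((range N).filter fun i => ¬ (i ∈ S ↔ i + 1 ∈ S)) ∨ ∃ p q, p < q ∧ S = Ioc p q := by
  obtain ⟨n, hn⟩ := hS
  have hN : N ∉ S := fun h => (hSN N h).false
  obtain ⟨p, -, hpn, hSp, hp⟩ :=
    exists_forall_Icc_and_not_succ (y := (· ∉ S)) n.zero_le h0 (not_not.2 hn)
  obtain ⟨q, hpq, hqN, hSq, hq⟩ :=
    exists_forall_Icc_and_not_succ (y := (· ∈ S)) (hpn.trans (hSN n hn)) (not_not.1 hp) hN
  by_cases hz : ∃ z ∈ S, q < z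
  · left
    obtain ⟨z, hzS, hqz⟩ := hz
    obtain ⟨r, hqr, hrz, hSr, hr⟩ :=
      exists_forall_Icc_and_not_succ (y := (· ∉ S)) hqz hq (not_not.2 hzS)
    obtain ⟨s, hzs, hsN, hSs, hs⟩ :=
      exists_forall_Icc_and_not_succ (y := (· ∈ S)) (hSN z hzS).le hzS hN
    refine three_lt_card.2 ⟨p, ?_, q, ?_, r, ?_, s, ?_, ?_⟩
    all_goals grind
  · refine .inr ⟨p, q, hpq, ?_⟩
    ext i
    grind

lemma exists_two_separated_pairs {k p q : ℕ} (hpq : p + 2 ≤ q) (hq : q < 2 * k)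
    (hqp : q + 2 ≤ p + 2 * k) :
    ∃ i j, i ≠ j ∧ i < k ∧ j < k ∧ ¬ (i ∈ Ioc p q ↔ i + k ∈ Ioc p q) ∧
      ¬ (j ∈ Ioc p q ↔ j + k ∈ Ioc p q) := by
  simp only [mem_Ioc]
  by_cases hqk : q ≤ p + k
  · refine ⟨if p + 1 < k then p + 1 else p + 1 - k, if p + 2 < k then p + 2 else p + 2 - k, ?_⟩
    grind
  · refine ⟨if q + 1 < 2 * k then q + 1 - k else 0,
      if q + 2 < 2 * k then q + 2 - k else q + 2 - 2 * k, ?_⟩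
    grind

/-- The Möbius ladder with `2 * k` vertices: the rails `Sum.inl i` form a Hamiltonian cycle, and
the rungs `Sum.inr j` join opposite vertices of it. -/
def mobiusLadder (k : ℕ) : Multigraph where
  V := Fin (2 * k)
  E := Fin (2 * k) ⊕ Fin k
  src
    | .inl i => i
    | .inr j => ⟨j, by omega⟩
  tgt
    | .inl i => ⟨if i + 1 = 2 * k then 0 else i + 1, by split_ifs <;> omega⟩
    | .inr j => ⟨j + k, by omega⟩

namespace mobiusLadder

variable {k : ℕ}

lemma card_E : Fintype.card (mobiusLadder k).E = 3 * k := by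
  have : Fintype.card (mobiusLadder k).E = Fintype.card (Fin (2 * k) ⊕ Fin k) := rfl
  rw [this, Fintype.card_sum, Fintype.card_fin, Fintype.card_fin]
  omega

lemma card_V : Fintype.card (mobiusLadder k).V = 2 * k := Fintype.card_fin _

lemma loopless (hk : 2 ≤ k) : (mobiusLadder k).Loopless := by
  rintro (i | j) h
  · have : (i : ℕ) = if (i : ℕ) + 1 = 2 * k then 0 else (i : ℕ) + 1 := congrArg Fin.val h
    grind
  · have : (j : ℕ) = j + k := congrArg Fin.val h
    omega

lemma inl_mem_star {i u : Fin (2 * k)} : Sum.inl i ∈ (mobiusLadder k).star u ↔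
    (i : ℕ) = u ∨ (if i + 1 = 2 * k then 0 else i + 1 : ℕ) = u :=
  Multigraph.mem_star.trans (or_congr Fin.ext_iff Fin.ext_iff)

lemma inr_mem_star {j : Fin k} {u : Fin (2 * k)} : Sum.inr j ∈ (mobiusLadder k).star u ↔
    (j : ℕ) = u ∨ (j + k : ℕ) = u :=
  Multigraph.mem_star.trans (or_congr Fin.ext_iff Fin.ext_iff)

lemma isProperEdgeColoring (hk : 2 ≤ k) :
    Multigraph.IsProperEdgeColoring (D := mobiusLadder k)
      (Sum.elim (fun i => if (i : ℕ) % 2 = 0 then 1 else 2) fun _ => 0) := by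
  rintro u (i | i) hi (j | j) hj hij <;> simp only [Sum.elim_inl, Sum.elim_inr] at hij
  · have := inl_mem_star.1 hi
    have := inl_mem_star.1 hj
    congr 1
    ext
    grind
  · grind
  · grind
  · have := inr_mem_star.1 hi
    have := inr_mem_star.1 hj
    congr 1
    ext
    omega

section cutEdges

variable {A : Finset (mobiusLadder k).V}

lemma lt_of_mem_map_valEmbedding {i : ℕ} (hi : i ∈ A.map Fin.valEmbedding) : i < 2 * k := by
  obtain ⟨v, -, rfl⟩ := mem_map.1 hi
  exact v.isLt

lemma inl_mem_cutEdges (hA : 0 ∉ A.map Fin.valEmbedding) {i : Fin (2 * k)} :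
    Sum.inl i ∈ (mobiusLadder k).cutEdges A ↔
      ¬ ((i : ℕ) ∈ A.map Fin.valEmbedding ↔ (i + 1 : ℕ) ∈ A.map Fin.valEmbedding) := by
  refine Multigraph.mem_cutEdges.trans (_root_.not_congr (iff_congr
    (mem_map' Fin.valEmbedding).symm ((mem_map' Fin.valEmbedding).symm.trans ?_)))
  change (if i + 1 = 2 * k then 0 else i + 1 : ℕ) ∈ A.map Fin.valEmbedding ↔ _
  split_ifs with hi
  · exact iff_of_false hA fun h => (lt_of_mem_map_valEmbedding h).ne hi
  · rfl

lemma inr_mem_cutEdges {j : Fin k} : Sum.inr j ∈ (mobiusLadder k).cutEdges A ↔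
    ¬ ((j : ℕ) ∈ A.map Fin.valEmbedding ↔ (j + k : ℕ) ∈ A.map Fin.valEmbedding) :=
  Multigraph.mem_cutEdges.trans (_root_.not_congr (iff_congr
    (mem_map' Fin.valEmbedding).symm (mem_map' Fin.valEmbedding).symm))

lemma card_changes_le_card_cutEdges (hA : 0 ∉ A.map Fin.valEmbedding) :
    #((range (2 * k)).filter fun i =>
      ¬ (i ∈ A.map Fin.valEmbedding ↔ i + 1 ∈ A.map Fin.valEmbedding)) ≤
      #((mobiusLadder k).cutEdges A) := by
  refine card_le_card_of_surjOn (Sum.elim Fin.val fun _ : Fin k => 0) fun i hi => ?_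
  obtain ⟨hik, hi⟩ := mem_filter.1 hi
  exact ⟨.inl ⟨i, mem_range.1 hik⟩, (inl_mem_cutEdges hA).2 hi, rfl⟩

lemma four_le_card_cutEdges_of_eq_Ioc {p q : ℕ} (hA : A.map Fin.valEmbedding = Ioc p q)
    (hq : q < 2 * k) (hpq : p + 2 ≤ q) (hqp : q + 2 ≤ p + 2 * k) :
    4 ≤ #((mobiusLadder k).cutEdges A) := by
  have h0 : 0 ∉ A.map Fin.valEmbedding := by simp [hA]
  obtain ⟨i, j, hij, hi, hj, hip, hjp⟩ := exists_two_separated_pairs hpq hq hqp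
  refine three_lt_card.2 ⟨.inl ⟨p, by omega⟩, (inl_mem_cutEdges h0).2 ?_,
    .inl ⟨q, hq⟩, (inl_mem_cutEdges h0).2 ?_, .inr ⟨i, hi⟩, inr_mem_cutEdges.2 ?_,
    .inr ⟨j, hj⟩, inr_mem_cutEdges.2 ?_, ?_⟩
  · grind
  · grind
  · rwa [hA]
  · rwa [hA]
  · grind

lemma four_le_card_cutEdges_or_singleton (hA : A.Nonempty) (h0 : 0 ∉ A.map Fin.valEmbedding) :
    4 ≤ #((mobiusLadder k).cutEdges A) ∨ ∃ u, A = {u} ∨ A = {u}ᶜ := by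
  rcases four_le_card_changes_or_eq_Ioc h0 (hA.map (f := Fin.valEmbedding))
    fun _ => lt_of_mem_map_valEmbedding with hcard | ⟨p, q, hpq, hA⟩
  · exact .inl (hcard.trans (card_changes_le_card_cutEdges h0))
  · have hq : q < 2 * k := lt_of_mem_map_valEmbedding (hA ▸ right_mem_Ioc.2 hpq)
    have mem_iff : ∀ v : Fin (2 * k), v ∈ A ↔ p < (v : ℕ) ∧ (v : ℕ) ≤ q := fun v =>
      (mem_map' Fin.valEmbedding).symm.trans (by rw [hA]; exact mem_Ioc)
    by_cases hone : q = p + 1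
    · refine .inr ⟨⟨q, hq⟩, .inl (Finset.ext fun v => (mem_iff v).trans ?_)⟩
      refine Iff.trans ?_ (Fin.ext_iff.symm.trans mem_singleton.symm)
      change _ ↔ Fin.val v = q
      omega
    by_cases hall : p = 0 ∧ q + 1 = 2 * k
    · refine .inr ⟨⟨0, by omega⟩, .inr (Finset.ext fun v => (mem_iff v).trans ?_)⟩
      refine Iff.trans ?_ (mem_compl.trans mem_singleton.not).symm
      refine Iff.trans ?_ Fin.val_ne_iff
      change _ ↔ Fin.val v ≠ 0
      omega
    · exact .inl (four_le_card_cutEdges_of_eq_Ioc hA hq (by omega) (by omega))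

end cutEdges

lemma four_le_card_cutEdges_or_eq_star (hk : 2 ≤ k) {A : Finset (mobiusLadder k).V}
    (hA : A.Nonempty) (hA' : A ≠ univ) : 4 ≤ #((mobiusLadder k).cutEdges A) ∨
      ∃ u, (mobiusLadder k).cutEdges A = (mobiusLadder k).star u := by
  wlog h0 : 0 ∉ A.map Fin.valEmbedding generalizing A
  · rw [← Multigraph.cutEdges_compl]
    refine this ?_ ?_ ?_
    · rwa [nonempty_iff_ne_empty, Ne, compl_eq_empty_iff]
    · rwa [Ne, compl_eq_univ_iff, ← Ne, ← nonempty_iff_ne_empty]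
    · obtain ⟨v, hv, hv0⟩ := mem_map.1 (not_not.1 h0)
      intro h
      obtain ⟨u, hu, hu0⟩ := mem_map.1 h
      obtain rfl : u = v := Fin.ext (hu0.trans hv0.symm)
      exact (mem_compl (α := (mobiusLadder k).V)).1 hu hv
  simp only [← (loopless hk).cutEdges_singleton]
  refine (four_le_card_cutEdges_or_singleton hA h0).imp_right ?_
  rintro ⟨u, rfl | rfl⟩
  · exact ⟨u, rfl⟩
  · exact ⟨u, Multigraph.cutEdges_compl _⟩

lemma memDk (hk : 2 ≤ k) : memDk k (mobiusLadder k) := by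
  have hdeg := (isProperEdgeColoring hk).deg_eq_three (loopless hk) (by rw [card_E, card_V]; omega)
  have hbond : ∀ F, (mobiusLadder k).Disconnects F → 3 ≤ #F := by
    intro F hF
    obtain ⟨_, hCF, A, hA, hA', rfl⟩ := Multigraph.disconnects_iff_exists_isCut_subset.1 hF
    refine le_trans ?_ (card_le_card hCF)
    rcases four_le_card_cutEdges_or_eq_star hk hA hA' with h | ⟨u, h⟩
    · omega
    · rw [h, (loopless hk).card_star, hdeg]
  refine ⟨?_, hdeg, hbond, ?_⟩
  · by_contra hconn
    have := hbond ∅ (by rwa [Multigraph.Disconnects, sdiff_empty])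
    simp at this
  · rw [Multigraph.nE, Multigraph.nV, card_E, card_V]
    omega

lemma onlyTrivialThreeBonds (hk : 2 ≤ k) : OnlyTrivialThreeBonds (mobiusLadder k) := by
  rintro _ ⟨⟨A, hA, hA', rfl⟩, -⟩ hcard
  exact (four_le_card_cutEdges_or_eq_star hk hA hA').resolve_left (by omega)

end mobiusLadder

lemma exists_onlyTrivialThreeBonds_balancedPiV {k m : ℕ} (hk : 2 ≤ k) (hm : 3 * k ≤ m) :
    ∃ (D : Multigraph) (w : D.E → ℕ), memDk k D ∧ IsBalancedWeighting D w m ∧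
      OnlyTrivialThreeBonds D ∧ BalancedPiV D w (stdWeight m k) := by
  have hD := mobiusLadder.memDk hk
  obtain ⟨H, hH, hbal⟩ := (mobiusLadder.isProperEdgeColoring hk).exists_balancedWeights_degIn hD hk
    (Nat.mod_lt m (show 0 < 3 * k by omega))
  obtain ⟨w, hw, hπ⟩ := hD.exists_balancedPiV (by omega) hm hH hbal
  exact ⟨_, w, hD, hw, mobiusLadder.onlyTrivialThreeBonds hk, hπ⟩

/-- for k ≥ 2 and m ≥ 3k, a balanced weighting w of D ∈ 𝒟_k gives a graph
minimizing d₃ within ℬ_m(𝒟_k) iff all 3-bonds of D are trivial and the π^v-values of D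
are balanced. -/
theorem d3_min_in_BmDk (k m : ℕ) (hk : 2 ≤ k) (hm : 3 * k ≤ m)
    (D : Multigraph) (hD : memDk k D) (w : D.E → ℕ) (hw : IsBalancedWeighting D w m) :
    (∀ (D' : Multigraph) (w' : D'.E → ℕ), memDk k D' → IsBalancedWeighting D' w' m →
        (subdivide D w).d 3 ≤ (subdivide D' w').d 3) ↔
      (OnlyTrivialThreeBonds D ∧ BalancedPiV D w (stdWeight m k)) := by
  have hpos := hw.pos hD hm
  constructor
  · intro hmin
    obtain ⟨M, v, hM, hv, hbonds, hπ⟩ := exists_onlyTrivialThreeBonds_balancedPiV hk hm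
    have hle := calc D.disconnectionWeight 3 w
      _ ≤ M.disconnectionWeight 3 v := (hw.d_subdivide_le_iff hv hD hM hm 3).1 (hmin M v hM hv)
      _ = M.starWeight v :=
        ((hM.starWeight_eq_disconnectionWeight_iff hk (hv.pos hM hm)).2 hbonds).symm
    have hM_le : M.starWeight v ≤ D.starWeight w := hv.starWeight_le hw hM hD hk hm hπ
    have hD_le : D.starWeight w ≤ D.disconnectionWeight 3 w :=
      hD.starWeight_le_disconnectionWeight hk w
    exact ⟨(hD.starWeight_eq_disconnectionWeight_iff hk hpos).1 (by omega),
      (hv.starWeight_eq_iff hw hM hD hk hm hπ).1 (by omega)⟩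
  · rintro ⟨hbonds, hπ⟩ D' w' hD' hw'
    rw [hw.d_subdivide_le_iff hw' hD hD' hm,
      ← (hD.starWeight_eq_disconnectionWeight_iff hk hpos).2 hbonds]
    exact (hw.starWeight_le hw' hD hD' hk hm hπ).trans
      (hD'.starWeight_le_disconnectionWeight hk w')
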